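/- For every n ≥ 5 with n ≡ 1 (mod 4), the alternating configuration of n pegs can be sorted in ⌈n/2⌉ Berge 3-moves. Specifically, writing n = 4i+1, the chain of moves {4i+2, 2i, 4i+1, 2i−1, 4i, 2i−3, 4i−2, 2i−5, ..., ?, 1} (as constructed inductively: sort pegs 3..(2i+2) and (2i+5)..(4i+1) recursively by the solution for n−4, then perform the two moves taking pegs at 2i+4,2i+5,2i+6 to 3,4,5 and pegs at 1,2,3 to 2i+4,2i+5,2i+6) yields a valid sorting. Hence h(n,3) = ⌈n/2⌉ for n ≡ 1 (mod 4), n ≥ 5. -/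

import Mathlib

/-- A board configuration has finite support: only finitely many positions hold pegs. -/
def FinSupp (c : ℤ → Option Bool) : Prop := {p : ℤ | (c p).isSome}.Finite

/-- The disorder: number of pegs `p` such that it is NOT the case that the next peg
to the right of `p` exists and has the same color. -/
noncomputable def disorder (c : ℤ → Option Bool) : ℕ :=
  Set.ncard {p : ℤ | (c p).isSome ∧
    ¬ ∃ q : ℤ, p < q ∧ c q = c p ∧ ∀ r : ℤ, p < r → r < q → c r = none}

/-- A Berge `k`-move taking the `k` pegs at positions `i, i+1, ..., i+k-1` to the
`k` vacant positions `j, j+1, ..., j+k-1`, preserving order. -/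
def MoveTo (k : ℕ) (i j : ℤ) (c c' : ℤ → Option Bool) : Prop :=
  (j + k ≤ i ∨ i + k ≤ j) ∧
  (∀ t : ℤ, 0 ≤ t → t < k → (c (i + t)).isSome ∧ c (j + t) = none) ∧
  c' = fun p => if j ≤ p ∧ p < j + k then c (i + (p - j))
    else if i ≤ p ∧ p < i + k then none else c p

/-- A Berge `k`-move from some source to some destination. -/
def BergeMove (k : ℕ) (c c' : ℤ → Option Bool) : Prop :=
  ∃ i j : ℤ, MoveTo k i j c c'

/-- The alternating configuration of `n` pegs: pegs at positions `1,...,n`,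
white (`true`) at odd positions and black (`false`) at even positions. -/
def altConfig (n : ℕ) : ℤ → Option Bool :=
  fun p => if 1 ≤ p ∧ p ≤ (n : ℤ) then some (decide (p % 2 = 1)) else none

/-- A sorted configuration of `n` pegs: a contiguous block of `n` pegs, the first
`⌈n/2⌉` of one color, followed by the remaining `⌊n/2⌋` of the other color. -/
def IsSorted (n : ℕ) (c : ℤ → Option Bool) : Prop :=
  ∃ j : ℤ, ∃ w : Bool,
    (∀ p : ℤ, (c p).isSome ↔ (j ≤ p ∧ p < j + (n : ℤ))) ∧
    (∀ p : ℤ, j ≤ p → p < j + (((n + 1) / 2 : ℕ) : ℤ) → c p = some w) ∧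
    (∀ p : ℤ, j + (((n + 1) / 2 : ℕ) : ℤ) ≤ p → p < j + (n : ℤ) → c p = some (!w))

/-- The alternating configuration of `n` pegs can be sorted in `m` Berge `k`-moves. -/
def SortsIn (k n m : ℕ) : Prop :=
  ∃ f : ℕ → (ℤ → Option Bool), f 0 = altConfig n ∧
    (∀ i < m, BergeMove k (f i) (f (i + 1))) ∧ IsSorted n (f m)

/-!
For the upper bound, four pegs are inserted into the board for `n - 4`, two to the left of all
pegs and two at a cut that no move of the recursive solution straddles; two more moves then merge
them with the sorted blocks.

For the lower bound, count the positions `p` such that `p` and `p + 1` carry pegs of the same color.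
There are none at the start and at least `n - 2` at the end. A move creates at most one of them if
the pegs are contiguous, as at the start, and at most two in general, so `m` moves create at most
`2 * m - 1`. If `m = (n - 1) / 2` moves suffice, this is attained: every move after the first fills
the only gap exactly and opens a new one elsewhere, and whether the borders of the gap match the end
pegs flips each time. The gap can only be closed for good after an odd number of moves, whereas
`(n - 1) / 2` is even.
-/

/-- `Steps R m a b`: `b` is reached from `a` by a chain of exactly `m` steps of the relation `R`.
It replaces the sequences in `SortsIn` by a form suited to induction, composition and transport. -/
def Steps {α : Type*} (R : α → α → Prop) : ℕ → α → α → Prop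
  | 0 => Eq
  | m + 1 => Relation.Comp (Steps R m) R

theorem Steps.map {α β : Type*} {R : α → α → Prop} {S : β → β → Prop} (φ : α → β)
    (hφ : ∀ a b, R a b → S (φ a) (φ b)) {m : ℕ} {a b : α} (h : Steps R m a b) :
    Steps S m (φ a) (φ b) := by
  induction m generalizing b with
  | zero => exact congrArg φ h
  | succ m ih =>
    obtain ⟨d, had, hdb⟩ := h
    exact ⟨φ d, ih had, hφ d b hdb⟩

theorem Steps.trans {α : Type*} {R : α → α → Prop} {l m : ℕ} {a b d : α} (hab : Steps R l a b)
    (hbd : Steps R m b d) : Steps R (l + m) a d := by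
  induction m generalizing d with
  | zero => exact hbd ▸ hab
  | succ m ih =>
    obtain ⟨e, hbe, hed⟩ := hbd
    exact ⟨e, ih hbe, hed⟩

theorem steps_iff_exists_seq {α : Type*} {R : α → α → Prop} {m : ℕ} {a b : α} :
    Steps R m a b ↔ ∃ f : ℕ → α, f 0 = a ∧ (∀ i < m, R (f i) (f (i + 1))) ∧ f m = b := by
  induction m generalizing b with
  | zero => exact ⟨fun h => ⟨fun _ => a, rfl, by simp, h⟩, fun ⟨_, h0, _, hm⟩ => h0.symm.trans hm⟩
  | succ m ih =>
    constructor
    · rintro ⟨d, had, hdb⟩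
      obtain ⟨f, h0, hf, hm⟩ := ih.1 had
      refine ⟨Function.update f (m + 1) b, by simpa using h0, fun i hi => ?_, by simp⟩
      rcases Nat.lt_succ_iff_lt_or_eq.1 hi with hi | rfl
      · simpa [Function.update_of_ne, hi.ne, (hi.trans m.lt_succ_self).ne] using hf i hi
      · simpa [hm] using hdb
    · rintro ⟨f, h0, hf, hm⟩
      exact ⟨f m, ih.2 ⟨f, h0, fun i hi => hf i (by omega), rfl⟩, hm ▸ hf m (by omega)⟩

theorem sortsIn_iff_exists_steps {k n m : ℕ} :
    SortsIn k n m ↔ ∃ c, Steps (BergeMove k) m (altConfig n) c ∧ IsSorted n c := by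
  simp only [SortsIn, steps_iff_exists_seq]
  constructor
  · rintro ⟨f, h0, hf, hs⟩
    exact ⟨f m, ⟨f, h0, hf, rfl⟩, hs⟩
  · rintro ⟨_, ⟨f, h0, hf, rfl⟩, hs⟩
    exact ⟨f, h0, hf, hs⟩

section Moves

variable {k : ℕ} {i j p : ℤ} {c c' : ℤ → Option Bool}

namespace MoveTo

theorem apply (h : MoveTo k i j c c') (p : ℤ) :
    c' p = if j ≤ p ∧ p < j + k then c (i + (p - j))
      else if i ≤ p ∧ p < i + k then none else c p :=
  congrFun h.2.2 p

theorem apply_target (h : MoveTo k i j c c') (hjp : j ≤ p) (hpj : p < j + k) :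
    c' p = c (i + (p - j)) := by
  rw [h.apply, if_pos ⟨hjp, hpj⟩]

theorem apply_source (h : MoveTo k i j c c') (hip : i ≤ p) (hpi : p < i + k) : c' p = none := by
  have hdisj := h.1
  rw [h.apply, if_neg (by omega), if_pos ⟨hip, hpi⟩]

theorem outside_source (h : MoveTo k i j c c') (hp : (c' p).isSome) : p < i ∨ i + k ≤ p := by
  by_contra! hip
  simp [h.apply_source hip.1 hip.2] at hp

theorem apply_of_outside (h : MoveTo k i j c c') (hj : p < j ∨ j + k ≤ p)
    (hi : p < i ∨ i + k ≤ p) : c' p = c p := by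
  rw [h.apply, if_neg (by omega), if_neg (by omega)]

theorem isSome_source (h : MoveTo k i j c c') (hip : i ≤ p) (hpi : p < i + k) :
    (c p).isSome := by
  simpa using (h.2.1 (p - i) (by omega) (by omega)).1

theorem eq_none_target (h : MoveTo k i j c c') (hjp : j ≤ p) (hpj : p < j + k) : c p = none := by
  simpa using (h.2.1 (p - j) (by omega) (by omega)).2

theorem isSome_iff (h : MoveTo k i j c c') :
    (c' p).isSome ↔ j ≤ p ∧ p < j + k ∨ (c p).isSome ∧ ¬ (i ≤ p ∧ p < i + k) := by
  by_cases hj : j ≤ p ∧ p < j + k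
  · simp [h.apply_target hj.1 hj.2, hj, h.isSome_source (p := i + (p - j)) (by omega) (by omega)]
  by_cases hi : i ≤ p ∧ p < i + k
  · simp [h.apply_source hi.1 hi.2, hi, hj]
  · simp [h.apply_of_outside (p := p) (by omega) (by omega), hi, hj]

end MoveTo

end Moves

/-! ### Inserting pegs at a cut -/

section Construction

variable {k n : ℕ} {i j s : ℤ} {c c' : ℤ → Option Bool}

theorem MoveTo.extend {e : ℤ → ℤ} (he : e.Injective) (b : ℤ → Option Bool)
    (hi : ∀ t : ℤ, 0 ≤ t → t < k → e (i + t) = e i + t)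
    (hj : ∀ t : ℤ, 0 ≤ t → t < k → e (j + t) = e j + t) (h : MoveTo k i j c c') :
    MoveTo k (e i) (e j) (e.extend c b) (e.extend c' b) := by
  have mem_block {a : ℤ} (ha : ∀ t : ℤ, 0 ≤ t → t < k → e (a + t) = e a + t) {p : ℤ}
      (hp : e a ≤ p ∧ p < e a + k) : e (a + (p - e a)) = p := by
    rw [ha _ (by omega) (by omega)]; ring
  have block_iff {a : ℤ} (ha : ∀ t : ℤ, 0 ≤ t → t < k → e (a + t) = e a + t) (q : ℤ) :
      e a ≤ e q ∧ e q < e a + k ↔ a ≤ q ∧ q < a + k := by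
    constructor
    · intro hq
      have := he (mem_block ha hq)
      omega
    · intro hq
      have := ha (q - a) (by omega) (by omega)
      rw [add_sub_cancel] at this
      omega
  refine ⟨?_, fun t ht htk => ?_, funext fun p => ?_⟩
  · by_contra hoverlap
    have hpi : e i ≤ max (e i) (e j) ∧ max (e i) (e j) < e i + k := by omega
    have hpj : e j ≤ max (e i) (e j) ∧ max (e i) (e j) < e j + k := by omega
    have := he ((mem_block hi hpi).trans (mem_block hj hpj).symm)
    have := h.1
    omega
  · rw [← hi t ht htk, ← hj t ht htk, he.extend_apply, he.extend_apply]
    exact h.2.1 t ht htk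
  · by_cases hp : ∃ q, e q = p
    · obtain ⟨q, rfl⟩ := hp
      simp only [block_iff hi, block_iff hj, he.extend_apply]
      rw [h.apply]
      split_ifs with hq
      · have hqj := hj (q - j) (by omega) (by omega)
        rw [add_sub_cancel] at hqj
        rw [hqj, add_sub_cancel_left, ← hi _ (by omega) (by omega), he.extend_apply]
      · rfl
      · rfl
    · rw [if_neg fun h => hp ⟨_, mem_block hj h⟩, if_neg fun h => hp ⟨_, mem_block hi h⟩,
        Function.extend_apply' _ _ _ hp, Function.extend_apply' _ _ _ hp]

/-- The embedding of the board that opens up the four positions `1, 2, s + 3, s + 4`: two cells are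
inserted at the cut between `0` and `1`, and two at the cut between `s` and `s + 1`. -/
def spread (s p : ℤ) : ℤ := if p ≤ 0 then p else if p ≤ s then p + 2 else p + 4

theorem spread_injective (s : ℤ) : (spread s).Injective := by
  intro p q hpq
  simp only [spread] at hpq
  split_ifs at hpq <;> omega

theorem extend_spread_apply (hs : 0 ≤ s) (c b : ℤ → Option Bool) (p : ℤ) :
    (spread s).extend c b p = if p ≤ 0 then c p else if p ≤ 2 then b p else
      if p ≤ s + 2 then c (p - 2) else if p ≤ s + 4 then b p else c (p - 4) := by
  have apply_image {q : ℤ} (hq : spread s q = p) : (spread s).extend c b p = c q :=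
    hq ▸ (spread_injective s).extend_apply c b q
  have apply_gap (hp : 1 ≤ p ∧ p ≤ 2 ∨ s + 3 ≤ p ∧ p ≤ s + 4) :
      (spread s).extend c b p = b p := by
    refine Function.extend_apply' _ _ _ ?_
    rintro ⟨q, hq⟩
    simp only [spread] at hq
    split_ifs at hq <;> omega
  split_ifs
  · exact apply_image (by simp only [spread]; split_ifs; omega)
  · exact apply_gap (by omega)
  · exact apply_image (by simp only [spread]; split_ifs <;> omega)
  · exact apply_gap (by omega)
  · exact apply_image (by simp only [spread]; split_ifs <;> omega)

theorem extend_spread_altConfig (hs : 0 ≤ s) (hsn : s ≤ n) (heven : Even s) :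
    (spread s).extend (altConfig n) (altConfig (n + 4)) = altConfig (n + 4) := by
  obtain ⟨r, rfl⟩ := heven
  funext p
  have hsub₂ : (p - 2) % 2 = p % 2 := by omega
  have hsub₄ : (p - 4) % 2 = p % 2 := by omega
  rw [extend_spread_apply hs]
  simp only [altConfig, hsub₂, hsub₄]
  grind

/-- The `k` positions from `i` on are positive and do not straddle the cut between `s` and
`s + 1`. -/
def ClearOfCut (k : ℕ) (s i : ℤ) : Prop := 1 ≤ i ∧ i + k ≤ s + 1 ∨ s + 1 ≤ i

theorem ClearOfCut.spread_add (hs : 0 ≤ s) (h : ClearOfCut k s i) {t : ℤ} (ht : 0 ≤ t)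
    (htk : t < k) : spread s (i + t) = spread s i + t := by
  simp only [ClearOfCut] at h
  simp only [spread]
  split_ifs <;> omega

theorem ClearOfCut.map_spread (hs : 0 ≤ s) (h : ClearOfCut k s i) :
    ClearOfCut k (s + 2) (spread s i) := by
  simp only [ClearOfCut, spread] at *
  split_ifs <;> omega

/-- A Berge `k`-move whose source and destination both stay clear of the cut between `s` and
`s + 1`, so that cells can be inserted there without disturbing it. -/
def CutMove (k : ℕ) (s : ℤ) (c c' : ℤ → Option Bool) : Prop :=
  ∃ i j : ℤ, ClearOfCut k s i ∧ ClearOfCut k s j ∧ MoveTo k i j c c'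

theorem CutMove.bergeMove (h : CutMove k s c c') : BergeMove k c c' :=
  let ⟨i, j, _, _, h⟩ := h
  ⟨i, j, h⟩

theorem CutMove.extend_spread (hs : 0 ≤ s) (b : ℤ → Option Bool) (h : CutMove k s c c') :
    CutMove k (s + 2) ((spread s).extend c b) ((spread s).extend c' b) := by
  obtain ⟨i, j, hi, hj, h⟩ := h
  exact ⟨spread s i, spread s j, hi.map_spread hs, hj.map_spread hs,
    h.extend (spread_injective s) b (fun _ => hi.spread_add hs) fun _ => hj.spread_add hs⟩

/-- The configuration that results from moving the `k` positions from `i` on to the `k` positions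
from `j` on; it is meaningful when `MoveTo` applies, i.e. the former are full and the latter
empty. -/
def relocate (k : ℕ) (i j : ℤ) (c : ℤ → Option Bool) : ℤ → Option Bool :=
  fun p => if j ≤ p ∧ p < j + k then c (i + (p - j))
    else if i ≤ p ∧ p < i + k then none else c p

theorem cutMove_relocate (hi : ClearOfCut k s i) (hj : ClearOfCut k s j)
    (hij : j + k ≤ i ∨ i + k ≤ j)
    (h : ∀ t : ℤ, 0 ≤ t → t < k → (c (i + t)).isSome ∧ c (j + t) = none) :
    CutMove k s c (relocate k i j c) :=
  ⟨i, j, hi, hj, hij, h, rfl⟩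

/-- White pegs on `[l, m)` followed by black pegs on `[m, r)`: the target of the constructed
chains. -/
def twoBlocks (l m r : ℤ) : ℤ → Option Bool :=
  fun p => if l ≤ p ∧ p < m then some true else if m ≤ p ∧ p < r then some false else none

theorem isSorted_twoBlocks (l : ℤ) (n : ℕ) :
    IsSorted n (twoBlocks l (l + ((n + 1) / 2 : ℕ)) (l + n)) := by
  refine ⟨l, true, fun p => ?_, fun p hl hm => ?_, fun p hm hr => ?_⟩
  all_goals simp only [twoBlocks]; grind

theorem steps_altConfig_five : Steps (CutMove 3 4) 3 (altConfig 5) (twoBlocks 4 7 9) := by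
  set c₁ := relocate 3 2 6 (altConfig 5) with hc₁
  set c₂ := relocate 3 5 2 c₁ with hc₂
  have hmove₁ : CutMove 3 4 (altConfig 5) c₁ := by
    refine cutMove_relocate (.inl (by norm_num)) (.inr (by norm_num)) (by norm_num)
      fun t ht₀ ht₃ => ?_
    interval_cases t <;> decide
  have hmove₂ : CutMove 3 4 c₁ c₂ := by
    refine cutMove_relocate (.inr (by norm_num)) (.inl (by norm_num)) (by norm_num)
      fun t ht₀ ht₃ => ?_
    interval_cases t <;> decide
  have hmove₃ : CutMove 3 4 c₂ (relocate 3 1 5 c₂) := by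
    refine cutMove_relocate (.inl (by norm_num)) (.inr (by norm_num)) (by norm_num)
      fun t ht₀ ht₃ => ?_
    interval_cases t <;> decide
  have hfinal : relocate 3 1 5 c₂ = twoBlocks 4 7 9 := by
    funext p
    by_cases hp : 1 ≤ p ∧ p < 9
    · obtain ⟨hp₁, hp₉⟩ := hp
      interval_cases p <;> decide
    · simp only [twoBlocks, relocate, altConfig, hc₂, hc₁]
      grind
  exact ⟨c₂, ⟨c₁, ⟨_, rfl, hmove₁⟩, hmove₂⟩, hfinal ▸ hmove₃⟩

theorem steps_extend_twoBlocks {i : ℕ} (hi : 1 ≤ i) :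
    Steps (CutMove 3 (2 * i + 4)) 2
      ((spread (2 * i + 2)).extend (twoBlocks 4 (2 * i + 5) (4 * i + 5)) (altConfig (4 * i + 5)))
      (twoBlocks 4 (2 * i + 7) (4 * i + 9)) := by
  set c := (spread (2 * i + 2)).extend (twoBlocks 4 (2 * i + 5) (4 * i + 5)) (altConfig (4 * i + 5))
    with hc
  set c₁ := relocate 3 (2 * i + 6) 3 c with hc₁
  have hcp (p : ℤ) : c p =
      if p = 1 ∨ 6 ≤ p ∧ p < 2 * i + 6 ∨ 2 * i + 7 ≤ p ∧ p < 2 * i + 9 then some true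
      else if p = 2 ∨ p = 2 * i + 6 ∨ 2 * i + 9 ≤ p ∧ p < 4 * i + 9 then some false
      else none := by
    rw [hc, extend_spread_apply (by omega)]
    simp only [twoBlocks, altConfig]
    split_ifs <;> first | rfl | omega | (simp; omega)
  have hc₁p (p : ℤ) : c₁ p =
      if p = 1 ∨ 4 ≤ p ∧ p < 2 * i + 6 then some true
      else if p = 2 ∨ p = 3 ∨ 2 * i + 9 ≤ p ∧ p < 4 * i + 9 then some false
      else none := by
    simp only [hc₁, relocate, hcp]
    grind only
  have hfinal : relocate 3 1 (2 * i + 6) c₁ = twoBlocks 4 (2 * i + 7) (4 * i + 9) := by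
    funext p
    simp only [twoBlocks, relocate, hc₁p]
    grind only
  have hmove₁ : CutMove 3 (2 * i + 4) c c₁ := by
    refine cutMove_relocate (.inr (by omega)) (.inl (by omega)) (by omega) fun t ht₀ ht₃ => ?_
    simp only [hcp]
    grind
  have hmove₂ : CutMove 3 (2 * i + 4) c₁ (relocate 3 1 (2 * i + 6) c₁) := by
    refine cutMove_relocate (.inl (by omega)) (.inr (by omega)) (by omega) fun t ht₀ ht₃ => ?_
    simp only [hc₁p]
    grind
  exact ⟨c₁, ⟨c, rfl, hmove₁⟩, hfinal ▸ hmove₂⟩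

theorem steps_altConfig {i : ℕ} (hi : 1 ≤ i) :
    Steps (CutMove 3 (2 * i + 2)) (2 * i + 1) (altConfig (4 * i + 1))
      (twoBlocks 4 (2 * i + 5) (4 * i + 5)) := by
  induction i, hi using Nat.le_induction with
  | base => exact steps_altConfig_five
  | succ i hi ih =>
    have hlift := ih.map (S := CutMove 3 (2 * i + 4))
      ((spread (2 * i + 2)).extend · (altConfig (4 * i + 1 + 4)))
      fun c c' h => by simpa [add_assoc] using h.extend_spread (by omega) _
    rw [extend_spread_altConfig (by omega) (by push_cast; omega) ⟨i + 1, by ring⟩] at hlift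
    have hchain := hlift.trans (steps_extend_twoBlocks hi)
    rw [show 2 * (i + 1) + 1 = 2 * i + 1 + 2 by ring]
    convert hchain using 2 <;> omega

theorem sortsIn_three {i : ℕ} (hi : 1 ≤ i) : SortsIn 3 (4 * i + 1) (2 * i + 1) := by
  refine sortsIn_iff_exists_steps.2
    ⟨twoBlocks 4 (2 * i + 5) (4 * i + 5),
      (steps_altConfig hi).map id fun _ _ => CutMove.bergeMove, ?_⟩
  convert isSorted_twoBlocks 4 (4 * i + 1) using 2 <;> omega

end Construction

/-! ### Counting equal neighbors -/

section LowerBound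

variable {k n m : ℕ} {i j l g r : ℤ} {s : Prop} {c c' : ℤ → Option Bool}

theorem isSome_altConfig_iff {p : ℤ} : (altConfig n p).isSome ↔ 1 ≤ p ∧ p ≤ n := by
  simp [altConfig]

theorem finSupp_altConfig (n : ℕ) : FinSupp (altConfig n) :=
  (Set.finite_Icc 1 (n : ℤ)).subset fun _ => isSome_altConfig_iff.1

theorem MoveTo.finSupp (h : MoveTo k i j c c') (hc : FinSupp c) : FinSupp c' :=
  ((Set.finite_Ico j (j + k)).union hc).subset fun _ hp => (h.isSome_iff.1 hp).imp id And.left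

theorem Steps.finSupp (h : Steps (BergeMove k) m c c') (hc : FinSupp c) : FinSupp c' := by
  induction m generalizing c' with
  | zero => exact h ▸ hc
  | succ m ih =>
    obtain ⟨d, hcd, i, j, hmove⟩ := h
    exact hmove.finSupp (ih hcd)

/-- The positions `p` such that `p` and `p + 1` carry pegs of the same color. Sorting has to create
almost all possible such positions. -/
def monoPairs (c : ℤ → Option Bool) : Set ℤ := {p | (c p).isSome ∧ c (p + 1) = c p}

theorem FinSupp.finite_monoPairs (hc : FinSupp c) : (monoPairs c).Finite :=
  hc.subset fun _ => And.left

theorem monoPairs_altConfig (n : ℕ) : monoPairs (altConfig n) = ∅ := by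
  rw [Set.eq_empty_iff_forall_notMem]
  rintro p ⟨hp, hpair⟩
  have hp₁ := isSome_altConfig_iff.1 hp
  have hp₂ := isSome_altConfig_iff.1 (hpair ▸ hp)
  simp only [altConfig, if_pos hp₁, if_pos hp₂, Option.some_inj, decide_eq_decide] at hpair
  omega

namespace MoveTo

/-- Pairs inside the moved block travel with it, and all others stay where they are. -/
theorem ncard_monoPairs_sdiff_le (h : MoveTo k i j c c') (hk : 0 < k) (hc : FinSupp c) :
    (monoPairs c' \ {j - 1, j + k - 1}).ncard ≤ (monoPairs c \ {i - 1, i + k - 1}).ncard := by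
  refine Set.ncard_le_ncard_of_injOn (fun p => if j ≤ p ∧ p < j + k then i + (p - j) else p)
    ?_ ?_ hc.finite_monoPairs.sdiff
  · rintro p ⟨⟨hp, hpair⟩, hpD⟩
    have hp' := h.outside_source hp
    have hp'' := h.outside_source (hpair ▸ hp)
    simp only [Set.mem_insert_iff, Set.mem_singleton_iff, not_or] at hpD
    by_cases hpj : j ≤ p ∧ p < j + k
    · rw [if_pos hpj]
      rw [h.apply_target hpj.1 hpj.2] at hp hpair
      rw [h.apply_target (by omega) (by omega), show i + (p + 1 - j) = i + (p - j) + 1 by ring]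
        at hpair
      refine ⟨⟨hp, hpair⟩, ?_⟩
      simp only [Set.mem_insert_iff, Set.mem_singleton_iff]
      omega
    · rw [if_neg hpj]
      rw [h.apply_of_outside (p := p) (by omega) (by omega)] at hp hpair
      rw [h.apply_of_outside (by omega) (by omega)] at hpair
      refine ⟨⟨hp, hpair⟩, ?_⟩
      simp only [Set.mem_insert_iff, Set.mem_singleton_iff]
      omega
  · rintro p ⟨⟨hp, -⟩, -⟩ q ⟨⟨hq, -⟩, -⟩ hpq
    have hp' := h.outside_source hp
    have hq' := h.outside_source hq
    simp only at hpq
    split_ifs at hpq <;> omega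

theorem ncard_monoPairs_add_le (h : MoveTo k i j c c') (hk : 0 < k) (hc : FinSupp c) :
    (monoPairs c').ncard + (monoPairs c ∩ {i - 1, i + k - 1}).ncard ≤
      (monoPairs c).ncard + (monoPairs c' ∩ {j - 1, j + k - 1}).ncard := by
  have hle := h.ncard_monoPairs_sdiff_le hk hc
  have hold := Set.ncard_inter_add_ncard_sdiff_eq_ncard (monoPairs c) {i - 1, i + k - 1}
    hc.finite_monoPairs
  have hnew := Set.ncard_inter_add_ncard_sdiff_eq_ncard (monoPairs c') {j - 1, j + k - 1}
    (h.finSupp hc).finite_monoPairs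
  omega

theorem ncard_monoPairs_add_le_add_two (h : MoveTo k i j c c') (hk : 0 < k) (hc : FinSupp c) :
    (monoPairs c').ncard + (monoPairs c ∩ {i - 1, i + k - 1}).ncard ≤
      (monoPairs c).ncard + 2 := by
  have hends : (monoPairs c' ∩ {j - 1, j + k - 1}).ncard ≤ ({j - 1, j + k - 1} : Set ℤ).ncard :=
    Set.ncard_le_ncard Set.inter_subset_right
  rw [Set.ncard_pair (by omega)] at hends
  exact (h.ncard_monoPairs_add_le hk hc).trans (by omega)

theorem eq_of_sub_one_mem_monoPairs (h : MoveTo k i j c c') (hk : 0 < k)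
    (hj : j - 1 ∈ monoPairs c') : c (j - 1) = c i ∧ i + k ≠ j := by
  obtain ⟨hsome, hpair⟩ := hj
  have hsource := h.outside_source hsome
  rw [sub_add_cancel, h.apply_target le_rfl (by omega), sub_self, add_zero,
    h.apply_of_outside (by omega) (by omega)] at hpair
  exact ⟨hpair.symm, by omega⟩

theorem eq_of_add_sub_one_mem_monoPairs (h : MoveTo k i j c c') (hk : 0 < k)
    (hj : j + k - 1 ∈ monoPairs c') : c (j + k) = c (i + k - 1) ∧ j + k ≠ i := by
  obtain ⟨hsome, hpair⟩ := hj
  rw [sub_add_cancel] at hpair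
  have hsource := h.outside_source (hpair ▸ hsome)
  rw [h.apply_of_outside (by omega) (by omega), h.apply_target (by omega) (by omega),
    show i + (j + k - 1 - j) = i + k - 1 by ring] at hpair
  exact ⟨hpair, by omega⟩

theorem mem_monoPairs_of_ncard_lt (h : MoveTo k i j c c') (hk : 0 < k) (hc : FinSupp c)
    (hgain : (monoPairs c).ncard < (monoPairs c').ncard) :
    j - 1 ∈ monoPairs c' ∨ j + k - 1 ∈ monoPairs c' := by
  have hadd := h.ncard_monoPairs_add_le hk hc
  obtain ⟨p, hp, rfl | rfl⟩ := Set.nonempty_of_ncard_ne_zero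
    (s := monoPairs c' ∩ {j - 1, j + k - 1}) (by omega)
  exacts [.inl hp, .inr hp]

theorem mem_monoPairs_of_ncard_add_two_le (h : MoveTo k i j c c') (hk : 0 < k) (hc : FinSupp c)
    (hgain : (monoPairs c).ncard + 2 ≤ (monoPairs c').ncard) :
    j - 1 ∈ monoPairs c' ∧ j + k - 1 ∈ monoPairs c' := by
  have hadd := h.ncard_monoPairs_add_le hk hc
  have hall : monoPairs c' ∩ {j - 1, j + k - 1} = {j - 1, j + k - 1} :=
    Set.eq_of_subset_of_ncard_le Set.inter_subset_right (by rw [Set.ncard_pair] <;> omega)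
  rw [Set.inter_eq_right] at hall
  exact ⟨hall (by simp), hall (by simp)⟩

theorem notMem_monoPairs_of_ncard_add_two_le (h : MoveTo k i j c c') (hk : 0 < k)
    (hc : FinSupp c) (hgain : (monoPairs c).ncard + 2 ≤ (monoPairs c').ncard) :
    i - 1 ∉ monoPairs c ∧ i + k - 1 ∉ monoPairs c := by
  have hadd := h.ncard_monoPairs_add_le_add_two hk hc
  have hnone : monoPairs c ∩ {i - 1, i + k - 1} = ∅ :=
    (Set.ncard_eq_zero (hc.finite_monoPairs.inter_of_left _)).1 (by omega)
  exact ⟨fun hi => hnone.subset ⟨hi, by simp⟩, fun hi => hnone.subset ⟨hi, by simp⟩⟩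

end MoveTo

/-- The pegs of `c` occupy consecutive positions, i.e. there is no vacancy between two pegs. -/
def IsContiguous (c : ℤ → Option Bool) : Prop := {p | (c p).isSome}.OrdConnected

theorem isContiguous_of_isSome_iff (h : ∀ p, (c p).isSome ↔ l ≤ p ∧ p ≤ r) : IsContiguous c := by
  have hIcc : {p | (c p).isSome} = Set.Icc l r := Set.ext h
  rw [IsContiguous, hIcc]
  exact Set.ordConnected_Icc

theorem MoveTo.ncard_monoPairs_le_of_isContiguous (h : MoveTo k i j c c') (hk : 0 < k)
    (hc : FinSupp c) (hcont : IsContiguous c) :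
    (monoPairs c').ncard ≤ (monoPairs c).ncard + 1 := by
  by_contra! hgain
  have ⟨hleft, hright⟩ := h.mem_monoPairs_of_ncard_add_two_le hk hc hgain
  have hbefore : (c (j - 1)).isSome := by
    rw [(h.eq_of_sub_one_mem_monoPairs hk hleft).1]
    exact h.isSome_source le_rfl (by omega)
  have hafter : (c (j + k)).isSome := by
    rw [(h.eq_of_add_sub_one_mem_monoPairs hk hright).1]
    exact h.isSome_source (by omega) (by omega)
  have hj : (c j).isSome := hcont.out hbefore hafter ⟨by omega, by omega⟩
  simp [h.eq_none_target le_rfl (by omega)] at hj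

/-- The pegs of `c` occupy `[l, r]` except for `k` vacancies from `g` on. The proposition `s` says
that the two pegs bordering the gap have the colors of the end pegs on their respective sides; it
alternates along an extremal chain. -/
structure HasGap (k : ℕ) (s : Prop) (c : ℤ → Option Bool) (l g r : ℤ) : Prop where
  lt_gap : l < g
  gap_le : g + k ≤ r
  isSome_iff (p : ℤ) : (c p).isSome ↔ l ≤ p ∧ p < g ∨ g + k ≤ p ∧ p ≤ r
  left_iff : c (g - 1) = c l ↔ s
  right_iff : c (g + k) = c r ↔ s

theorem HasGap.not_isContiguous (h : HasGap k s c l g r) (hk : 0 < k) : ¬ IsContiguous c := by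
  intro hcont
  have hlt := h.lt_gap
  have hle := h.gap_le
  have hg : (c g).isSome := hcont.out (x := l) ((h.isSome_iff l).2 (by omega))
    (y := r) ((h.isSome_iff r).2 (by omega)) ⟨by omega, by omega⟩
  rw [h.isSome_iff] at hg
  omega

theorem HasGap.target_eq (h : HasGap k s c l g r) (hk : 0 < k) (hmove : MoveTo k i j c c')
    (hbefore : (c (j - 1)).isSome) (hafter : (c (j + k)).isSome) : j = g := by
  have hj : ¬ (c j).isSome := by simp [hmove.eq_none_target le_rfl (by omega)]
  rw [h.isSome_iff] at hbefore hafter hj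
  omega

theorem eq_iff_ne_of_ne {x y z : Option Bool} (hx : x.isSome) (hy : y.isSome) (hz : z.isSome)
    (hxy : x ≠ y) : x = z ↔ y ≠ z := by
  decide +revert

/-- The end pegs of the moved block match the borders of the gap it fills and differ from those of
the gap it opens. -/
theorem HasGap.of_moveTo (h : HasGap k s c l g r) (hk : 0 < k) (hc : FinSupp c)
    (hmove : MoveTo k i j c c') (hgain : (monoPairs c).ncard + 2 ≤ (monoPairs c').ncard) :
    HasGap k (¬ s) c' l i r ∨ IsContiguous c' ∧ s := by
  have ⟨hleft, hright⟩ := hmove.mem_monoPairs_of_ncard_add_two_le hk hc hgain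
  have ⟨hbefore, hafter⟩ := hmove.notMem_monoPairs_of_ncard_add_two_le hk hc hgain
  obtain ⟨hleft, hij⟩ := hmove.eq_of_sub_one_mem_monoPairs hk hleft
  obtain ⟨hright, hji⟩ := hmove.eq_of_add_sub_one_mem_monoPairs hk hright
  have hfirst : (c i).isSome := hmove.isSome_source le_rfl (by omega)
  have hlast : (c (i + k - 1)).isSome := hmove.isSome_source (by omega) (by omega)
  obtain rfl : j = g := h.target_eq hk hmove (hleft ▸ hfirst) (hright ▸ hlast)
  have hlj := h.lt_gap
  have hjr := h.gap_le
  have hdisj := hmove.1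
  have hi := (h.isSome_iff i).1 hfirst
  have hik := (h.isSome_iff (i + k - 1)).1 hlast
  by_cases hil : i = l
  · refine .inr ⟨isContiguous_of_isSome_iff (l := l + k) (r := r) fun p => ?_, ?_⟩
    · rw [hmove.isSome_iff, h.isSome_iff]
      omega
    · exact h.left_iff.1 (hleft.trans (hil ▸ rfl))
  by_cases hir : i + k - 1 = r
  · refine .inr ⟨isContiguous_of_isSome_iff (l := l) (r := r - k) fun p => ?_, ?_⟩
    · rw [hmove.isSome_iff, h.isSome_iff]
      omega
    · exact h.right_iff.1 (hright.trans (hir ▸ rfl))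
  have hl : (c l).isSome := (h.isSome_iff l).2 (by omega)
  have hr : (c r).isSome := (h.isSome_iff r).2 (by omega)
  have hi' : (c (i - 1)).isSome := (h.isSome_iff _).2 (by omega)
  have hik' : (c (i + k)).isSome := (h.isSome_iff _).2 (by omega)
  refine .inl ⟨by omega, by omega, fun p => ?_, ?_, ?_⟩
  · rw [hmove.isSome_iff, h.isSome_iff]
    omega
  · rw [hmove.apply_of_outside (by omega) (by omega), hmove.apply_of_outside (by omega) (by omega),
      ← h.left_iff, hleft]
    refine eq_iff_ne_of_ne hi' hfirst hl fun heq => hbefore ⟨hi', ?_⟩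
    rw [heq, sub_add_cancel]
  · rw [hmove.apply_of_outside (by omega) (by omega), hmove.apply_of_outside (by omega) (by omega),
      ← h.right_iff, hright]
    refine eq_iff_ne_of_ne hik' hlast hr fun heq => hafter ⟨hlast, ?_⟩
    rw [sub_add_cancel, heq]

theorem MoveTo.hasGap_or_isContiguous_of_append (h : MoveTo k i (r + 1) c c') (hk : 0 < k)
    (hsupp : ∀ p, (c p).isSome ↔ l ≤ p ∧ p ≤ r) (hends : c l = c r)
    (hne : ∀ p, l ≤ p → p < r → c (p + 1) ≠ c p) (hleft : c r = c i) (hir : i + k ≠ r + 1) :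
    HasGap k False c' l i (r + k) ∨ IsContiguous c' := by
  have hi := (hsupp i).1 (h.isSome_source le_rfl (by omega))
  have hik := (hsupp (i + k - 1)).1 (h.isSome_source (by omega) (by omega))
  by_cases hil : i = l
  · refine .inr (isContiguous_of_isSome_iff (l := l + k) (r := r + k) fun p => ?_)
    rw [h.isSome_iff, hsupp]
    omega
  refine .inl ⟨by omega, by omega, fun p => ?_, ?_, ?_⟩
  · rw [h.isSome_iff, hsupp]
    omega
  · rw [h.apply_of_outside (by omega) (by omega), h.apply_of_outside (by omega) (by omega), hends,
      hleft, iff_false]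
    simpa [eq_comm] using hne (i - 1) (by omega) (by omega)
  · rw [h.apply_of_outside (by omega) (by omega), h.apply_target (by omega) (by omega),
      show i + (r + k - (r + 1)) = i + k - 1 by ring, iff_false]
    simpa using hne (i + k - 1) (by omega) (by omega)

theorem MoveTo.hasGap_or_isContiguous_of_prepend (h : MoveTo k i (l - k) c c') (hk : 0 < k)
    (hsupp : ∀ p, (c p).isSome ↔ l ≤ p ∧ p ≤ r) (hends : c l = c r)
    (hne : ∀ p, l ≤ p → p < r → c (p + 1) ≠ c p) (hright : c l = c (i + k - 1)) (hil : i ≠ l) :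
    HasGap k False c' (l - k) i r ∨ IsContiguous c' := by
  have hi := (hsupp i).1 (h.isSome_source le_rfl (by omega))
  have hik := (hsupp (i + k - 1)).1 (h.isSome_source (by omega) (by omega))
  by_cases hir : i + k - 1 = r
  · refine .inr (isContiguous_of_isSome_iff (l := l - k) (r := r - k) fun p => ?_)
    rw [h.isSome_iff, hsupp]
    omega
  refine .inl ⟨by omega, by omega, fun p => ?_, ?_, ?_⟩
  · rw [h.isSome_iff, hsupp]
    omega
  · rw [h.apply_of_outside (by omega) (by omega), h.apply_target (by omega) (by omega), sub_self,
      add_zero, iff_false]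
    simpa [eq_comm] using hne (i - 1) (by omega) (by omega)
  · rw [h.apply_of_outside (by omega) (by omega), h.apply_of_outside (by omega) (by omega), ← hends,
      hright, iff_false]
    simpa using hne (i + k - 1) (by omega) (by omega)

/-- To form a pair the moved block has to be put next to an end of `c`. -/
theorem MoveTo.exists_hasGap_or_isContiguous (h : MoveTo k i j c c') (hk : 0 < k)
    (hsupp : ∀ p, (c p).isSome ↔ l ≤ p ∧ p ≤ r) (hends : c l = c r) (hpairs : monoPairs c = ∅)
    (hpos : 0 < (monoPairs c').ncard) :
    (∃ l g r, HasGap k False c' l g r) ∨ IsContiguous c' := by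
  have hc : FinSupp c := (Set.finite_Icc l r).subset fun p => (hsupp p).1
  have hne (p : ℤ) (hlp : l ≤ p) (hpr : p < r) : c (p + 1) ≠ c p := fun heq =>
    hpairs.subset ⟨(hsupp p).2 ⟨hlp, hpr.le⟩, heq⟩
  have hj : ¬ (c j).isSome := by simp [h.eq_none_target le_rfl (by omega)]
  have hjk : ¬ (c (j + k - 1)).isSome := by
    simp [h.eq_none_target (p := j + k - 1) (by omega) (by omega)]
  rw [hsupp] at hj hjk
  rcases h.mem_monoPairs_of_ncard_lt hk hc (by simpa [hpairs]) with hleft | hright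
  · obtain ⟨hleft, hij⟩ := h.eq_of_sub_one_mem_monoPairs hk hleft
    have hjr := (hsupp (j - 1)).1 (hleft ▸ h.isSome_source le_rfl (by omega))
    obtain rfl : j = r + 1 := by omega
    rw [add_sub_cancel_right] at hleft
    exact (h.hasGap_or_isContiguous_of_append hk hsupp hends hne hleft hij).imp_left
      fun hgap => ⟨_, _, _, hgap⟩
  · obtain ⟨hright, hji⟩ := h.eq_of_add_sub_one_mem_monoPairs hk hright
    have hjl := (hsupp (j + k)).1 (hright ▸ h.isSome_source (by omega) (by omega))
    obtain rfl : j = l - k := by omega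
    rw [sub_add_cancel] at hright hji
    exact (h.hasGap_or_isContiguous_of_prepend hk hsupp hends hne hright hji.symm).imp_left
      fun hgap => ⟨_, _, _, hgap⟩

theorem isContiguous_altConfig (n : ℕ) : IsContiguous (altConfig n) :=
  isContiguous_of_isSome_iff fun _ => isSome_altConfig_iff

theorem Steps.ncard_monoPairs_add_one_le (hk : 0 < k) (hm : 1 ≤ m)
    (h : Steps (BergeMove k) m (altConfig n) c) : (monoPairs c).ncard + 1 ≤ 2 * m := by
  induction m, hm using Nat.le_induction generalizing c with
  | base =>
    obtain ⟨_, rfl, i, j, hmove⟩ := h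
    have hle := hmove.ncard_monoPairs_le_of_isContiguous hk (finSupp_altConfig n)
      (isContiguous_altConfig n)
    simp only [monoPairs_altConfig, Set.ncard_empty] at hle
    omega
  | succ m _ ih =>
    obtain ⟨d, hd, i, j, hmove⟩ := h
    have hle := hmove.ncard_monoPairs_add_le_add_two hk (hd.finSupp (finSupp_altConfig n))
    have := ih hd
    omega

/-- Once the pegs are contiguous, the next move gains too little for the chain to stay extremal. -/
theorem Steps.exists_hasGap_or_isContiguous (hk : 0 < k) (hn : Odd n) (hm : 1 ≤ m)
    (h : Steps (BergeMove k) m (altConfig n) c) (hc : 2 * m ≤ (monoPairs c).ncard + 1) :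
    (∃ l g r, HasGap k (Even m) c l g r) ∨ IsContiguous c ∧ Odd m := by
  induction m, hm using Nat.le_induction generalizing c with
  | base =>
    obtain ⟨_, rfl, i, j, hmove⟩ := h
    have hends : altConfig n 1 = altConfig n n := by
      obtain ⟨r, rfl⟩ := hn
      simp [altConfig]
    simpa using hmove.exists_hasGap_or_isContiguous hk (fun _ => isSome_altConfig_iff) hends
      (monoPairs_altConfig n) (by omega)
  | succ m hm ih =>
    obtain ⟨d, hd, i, j, hmove⟩ := h
    have hfin := hd.finSupp (finSupp_altConfig n)
    have hle := hmove.ncard_monoPairs_add_le_add_two hk hfin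
    have hbound := hd.ncard_monoPairs_add_one_le hk hm
    rcases ih hd (by omega) with ⟨l, g, r, hgap⟩ | ⟨hcont, -⟩
    · simp only [Nat.even_add_one, ← Nat.not_even_iff_odd, not_not]
      exact (hgap.of_moveTo hk hfin hmove (by omega)).imp_left fun hgap => ⟨_, _, _, hgap⟩
    · have := hmove.ncard_monoPairs_le_of_isContiguous hk hfin hcont
      omega

theorem IsSorted.isContiguous (h : IsSorted n c) : IsContiguous c := by
  obtain ⟨j, -, hsupp, -, -⟩ := h
  refine isContiguous_of_isSome_iff (l := j) (r := j + n - 1) fun p => ?_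
  rw [hsupp]
  omega

theorem IsSorted.le_ncard_monoPairs_add_two (h : IsSorted n c) (hc : FinSupp c) :
    n ≤ (monoPairs c).ncard + 2 := by
  obtain ⟨j, w, hsupp, hfst, hsnd⟩ := h
  have hsub : Set.Ico j (j + n - 1) \ {j + ((n + 1) / 2 : ℕ) - 1} ⊆ monoPairs c := by
    rintro p ⟨⟨hjp, hpn⟩, hpm⟩
    rw [Set.mem_singleton_iff] at hpm
    refine ⟨(hsupp p).2 (by omega), ?_⟩
    rcases lt_or_gt_of_ne hpm with hlt | hgt
    · rw [hfst p hjp (by omega), hfst (p + 1) (by omega) (by omega)]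
    · rw [hsnd p (by omega) (by omega), hsnd (p + 1) (by omega) (by omega)]
  have hle := Set.ncard_le_ncard hsub hc.finite_monoPairs
  have hpred := Set.pred_ncard_le_ncard_sdiff_singleton (Set.Ico j (j + n - 1))
    (j + ((n + 1) / 2 : ℕ) - 1)
  have hcard : (Set.Ico j (j + n - 1)).ncard = n - 1 := by
    rw [← Finset.coe_Ico, Set.ncard_coe_finset, Int.card_Ico]
    omega
  omega

theorem SortsIn.half_le (hk : 0 < k) (hn : 2 < n) (hmod : n % 4 ≠ 3) (h : SortsIn k n m) :
    (n + 1) / 2 ≤ m := by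
  obtain ⟨c, hsteps, hsorted⟩ := sortsIn_iff_exists_steps.1 h
  have hpairs := hsorted.le_ncard_monoPairs_add_two (hsteps.finSupp (finSupp_altConfig n))
  by_contra! hlt
  have hm : 1 ≤ m := by
    by_contra! hm
    obtain rfl : m = 0 := by omega
    obtain rfl : altConfig n = c := hsteps
    simp only [monoPairs_altConfig, Set.ncard_empty] at hpairs
    omega
  have hbound := hsteps.ncard_monoPairs_add_one_le hk hm
  have hnm : n = 2 * m + 1 := by omega
  rcases hsteps.exists_hasGap_or_isContiguous hk ⟨m, hnm⟩ hm (by omega) with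
    ⟨l, g, r, hgap⟩ | ⟨-, hodd⟩
  · exact hgap.not_isContiguous hk hsorted.isContiguous
  · have := Nat.odd_iff.1 hodd
    omega

end LowerBound

theorem h_three_moves_one_mod_four (n : ℕ) (hn : 5 ≤ n) (hmod : n % 4 = 1) :
    IsLeast {m : ℕ | SortsIn 3 n m} ((n + 1) / 2) := by
  obtain ⟨i, rfl⟩ : ∃ i, n = 4 * i + 1 := ⟨n / 4, by omega⟩
  refine ⟨?_, fun m hm => hm.half_le (by norm_num) (by omega) (by omega)⟩
  rw [Set.mem_ofPred_eq, show (4 * i + 1 + 1) / 2 = 2 * i + 1 by omega]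
  exact sortsIn_three (by omega)
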